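/- Up to similarity, there are exactly three reducible 3-dimensional linear subspaces of the 3×3 matrices over F2 with trivial spectrum, namely: the space of strictly upper-triangular 3×3 matrices over F2; the space {[[0,a,x],[a,a,y],[0,0,0]] : a,x,y ∈ F2}; and the space {[[0,x,y],[0,0,a],[0,a,a]] : a,x,y ∈ F2}. That is, each of these three spaces is a reducible 3-dimensional trivial spectrum subspace, they are pairwise not similar, and every reducible 3-dimensional trivial spectrum subspace of the 3×3 matrices over F2 is similar to one of them. -/

import Mathlib

/-!
The three spaces are told apart by whether the matrices of `V`, and those of `Vᵀ`, have a common
nonzero kernel vector: for `NT3` both do, for `SpaceW3` only those of `V`, for `SpaceW2` only those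
of `Vᵀ`.

If `V` has trivial spectrum, an invariant line of `V` is killed by `V`. When `V` is reducible and
its invariant subspace is a plane, the orthogonal of that plane is an invariant line of `Vᵀ`; so,
up to transposition, `V` has a common kernel vector, which a change of basis moves to the first
basis vector. Then `V ≤ {0} ∨ U`, where `U` is the space of lower right `2 × 2` blocks of `V`, again
of trivial spectrum. If `U` had dimension at least `2`, the maps `M ↦ M eᵢ` on `U` would not be
injective (otherwise `eᵢ` would be in the range), which puts `E₁₂` and `E₂₁` in `U`; but `E₁₂ + E₂₁`
fixes `(1, 1)`. Counting dimensions, `V = {0} ∨ F2·A`. Since `A` is not scalar, it is similar to its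
companion matrix, and over `F2` the condition `det (A - 1) ≠ 0` forces `det A = tr A`. This leaves
two matrices, one giving `NT3` and the other `SpaceW3`.
-/

open Matrix

/-- A subspace of square matrices has *trivial spectrum* when no matrix of it has a nonzero
eigenvalue. -/
def TrivialSpectrum {n : ℕ} (V : Submodule (ZMod 2) (Matrix (Fin n) (Fin n) (ZMod 2))) : Prop :=
  ∀ M ∈ V, ∀ (c : ZMod 2) (x : Fin n → ZMod 2), c ≠ 0 → x ≠ 0 → M.mulVec x ≠ c • x

/-- Two subspaces of square matrices are *similar* when one is obtained from the other by
conjugating by a fixed invertible matrix. -/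
def MatSimilar {n : ℕ} (V₁ V₂ : Submodule (ZMod 2) (Matrix (Fin n) (Fin n) (ZMod 2))) : Prop :=
  ∃ P : Matrix (Fin n) (Fin n) (ZMod 2), IsUnit P ∧
    (V₂ : Set (Matrix (Fin n) (Fin n) (ZMod 2))) =
      (fun M => P * M * P⁻¹) '' (V₁ : Set (Matrix (Fin n) (Fin n) (ZMod 2)))

/-- A subspace of square matrices is *irreducible* when it stabilizes no nonzero proper
subspace of the underlying vector space. -/
def IrredMatSpace {n : ℕ} (V : Submodule (ZMod 2) (Matrix (Fin n) (Fin n) (ZMod 2))) : Prop :=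
  ¬ ∃ F : Submodule (ZMod 2) (Fin n → ZMod 2), F ≠ ⊥ ∧ F ≠ ⊤ ∧
      ∀ M ∈ V, ∀ x ∈ F, M.mulVec x ∈ F

/-- The space of strictly upper-triangular `3 × 3` matrices over `F2`. -/
def NT3 : Submodule (ZMod 2) (Matrix (Fin 3) (Fin 3) (ZMod 2)) where
  carrier := {M | ∀ i j : Fin 3, j ≤ i → M i j = 0}
  add_mem' := by
    intro M N hM hN i j h
    simp [Matrix.add_apply, hM i j h, hN i j h]
  zero_mem' := fun i j _ => rfl
  smul_mem' := by
    intro c M hM i j h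
    simp [Matrix.smul_apply, hM i j h]

/-- The matrices `!![0, a, x; a, a, y; 0, 0, 0]` (this is `F2·C ∨ 0`). -/
def SpaceW2 : Submodule (ZMod 2) (Matrix (Fin 3) (Fin 3) (ZMod 2)) where
  carrier := {M | ∃ a x y : ZMod 2, M = !![0, a, x; a, a, y; 0, 0, 0]}
  add_mem' := by
    rintro M N ⟨a, x, y, rfl⟩ ⟨a', x', y', rfl⟩
    exact ⟨a + a', x + x', y + y', by revert a x y a' x' y'; decide⟩
  zero_mem' := ⟨0, 0, 0, by decide⟩
  smul_mem' := by
    rintro k M ⟨a, x, y, rfl⟩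
    exact ⟨k * a, k * x, k * y, by revert k a x y; decide⟩

/-- The matrices `!![0, x, y; 0, 0, a; 0, a, a]` (this is `0 ∨ F2·C`). -/
def SpaceW3 : Submodule (ZMod 2) (Matrix (Fin 3) (Fin 3) (ZMod 2)) where
  carrier := {M | ∃ a x y : ZMod 2, M = !![0, x, y; 0, 0, a; 0, a, a]}
  add_mem' := by
    rintro M N ⟨a, x, y, rfl⟩ ⟨a', x', y', rfl⟩
    exact ⟨a + a', x + x', y + y', by revert a x y a' x' y'; decide⟩
  zero_mem' := ⟨0, 0, 0, by decide⟩
  smul_mem' := by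
    rintro k M ⟨a, x, y, rfl⟩
    exact ⟨k * a, k * x, k * y, by revert k a x y; decide⟩

open Module

section Conj

variable {R : Type*} [CommRing R] {n : Type*} [Fintype n] [DecidableEq n]

/-- The conjugation action `M ↦ P * M * P⁻¹` of the invertible matrices on the matrix space. -/
def conjModuleAut : GL n R →* Matrix n n R ≃ₗ[R] Matrix n n R :=
  (DistribMulAction.toModuleAut R _).comp ConjAct.toConjAct.toMonoidHom

lemma conjModuleAut_apply (P : GL n R) (M : Matrix n n R) :
    conjModuleAut P M = P.1 * M * P⁻¹.1 :=
  rfl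

lemma generalLinearGroup_mulVec_eq_zero_iff (P : GL n R) {x : n → R} : P.1 *ᵥ x = 0 ↔ x = 0 :=
  (mulVec_injective_of_isUnit P.isUnit).eq_iff' (mulVec_zero P.1)

lemma conjModuleAut_mulVec_eq_zero_iff (P : GL n R) (M : Matrix n n R) {x : n → R} :
    conjModuleAut P M *ᵥ (P.1 *ᵥ x) = 0 ↔ M *ᵥ x = 0 := by
  rw [conjModuleAut_apply, mulVec_mulVec, Units.inv_mul_cancel_right, ← mulVec_mulVec,
    generalLinearGroup_mulVec_eq_zero_iff]

end Conj

section Field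

variable {K : Type*} [Field K]

lemma exists_linearEquiv_apply_eq {E : Type*} [AddCommGroup E] [Module K E] {x y : E}
    (hx : x ≠ 0) (hy : y ≠ 0) : ∃ g : E ≃ₗ[K] E, g x = y := by
  obtain ⟨g, hg⟩ := Submodule.exists_linearEquiv_restrict_eq
    ((LinearEquiv.toSpanNonzeroSingleton K E x hx).symm ≪≫ₗ
      LinearEquiv.toSpanNonzeroSingleton K E y hy)
  refine ⟨g, ?_⟩
  rw [← hg ⟨x, Submodule.mem_span_singleton_self x⟩, LinearEquiv.trans_apply,
    LinearEquiv.coord_self, LinearEquiv.toSpanNonzeroSingleton_one]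

lemma exists_generalLinearGroup_mulVec_eq {n : Type*} [Fintype n] [DecidableEq n] {x y : n → K}
    (hx : x ≠ 0) (hy : y ≠ 0) : ∃ P : GL n K, P *ᵥ x = y := by
  obtain ⟨g, rfl⟩ := exists_linearEquiv_apply_eq (K := K) hx hy
  exact ⟨GeneralLinearGroup.toLin.symm (.ofLinearEquiv g), LinearMap.toMatrix'_mulVec _ _⟩

lemma exists_det_vecMul_ne_zero {A : Matrix (Fin 2) (Fin 2) K} (hA : ∀ c : K, A ≠ c • 1) :
    ∃ v, (of ![v, v ᵥ* A]).det ≠ 0 := by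
  by_contra! h
  have h01 : A 0 1 = 0 := by simpa [det_fin_two, vecMul, dotProduct] using h ![1, 0]
  have h10 : A 1 0 = 0 := by simpa [det_fin_two, vecMul, dotProduct] using h ![0, 1]
  have h11 : A 1 1 = A 0 0 := by
    simpa [det_fin_two, vecMul, dotProduct, h01, h10, sub_eq_zero] using h ![1, 1]
  exact hA (A 0 0) (by ext i j; fin_cases i <;> fin_cases j <;> simp [h01, h10, h11])

lemma of_vecMul_mul_eq_companion_mul {R : Type*} [CommRing R] (A : Matrix (Fin 2) (Fin 2) R)
    (v : Fin 2 → R) :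
    of ![v, v ᵥ* A] * A = !![0, 1; -A.det, A.trace] * of ![v, v ᵥ* A] := by
  ext i j
  fin_cases i <;> fin_cases j <;>
    simp [det_fin_two, trace_fin_two, mul_apply, vecMul, dotProduct] <;> ring

lemma exists_conj_eq_companion {A : Matrix (Fin 2) (Fin 2) K} (hA : ∀ c : K, A ≠ c • 1) :
    ∃ P : GL (Fin 2) K, conjModuleAut P A = !![0, 1; -A.det, A.trace] := by
  obtain ⟨v, hv⟩ := exists_det_vecMul_ne_zero hA
  refine ⟨GeneralLinearGroup.mkOfDetNeZero _ hv, ?_⟩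
  rw [conjModuleAut_apply, Units.mul_inv_eq_iff_eq_mul]
  exact of_vecMul_mul_eq_companion_mul A v

end Field

section TransposeSpace

/-- The space `Vᵀ` of the transposes of the matrices of `V`. -/
def transposeSpace {R : Type*} [Semiring R] {n : Type*} (V : Submodule R (Matrix n n R)) :
    Submodule R (Matrix n n R) :=
  V.comap (transposeLinearEquiv n n R R).toLinearMap

lemma finrank_transposeSpace {R : Type*} [Semiring R] {n : Type*} (V : Submodule R (Matrix n n R)) :
    finrank R (transposeSpace V) = finrank R V := by
  rw [transposeSpace, Submodule.comap_equiv_eq_map_symm, LinearEquiv.finrank_map_eq]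

variable {K : Type*} [Field K] {n : Type*} [Fintype n]

lemma dotProductBilin_nondegenerate :
    LinearMap.BilinForm.Nondegenerate (dotProductBilin K K : LinearMap.BilinForm K (n → K)) :=
  ⟨fun x hx => dotProduct_eq_zero x hx,
    fun x hx => dotProduct_eq_zero x fun y => dotProduct_comm x y ▸ hx y⟩

lemma exists_invariant_transposeSpace {V : Submodule K (Matrix n n K)} {F : Submodule K (n → K)}
    (hF : ∀ M ∈ V, ∀ x ∈ F, M *ᵥ x ∈ F) :
    ∃ F' : Submodule K (n → K), finrank K F' = Fintype.card n - finrank K F ∧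
      ∀ M ∈ transposeSpace V, ∀ y ∈ F', M *ᵥ y ∈ F' := by
  let B : LinearMap.BilinForm K (n → K) := dotProductBilin K K
  refine ⟨B.orthogonal F, by simpa using B.finrank_orthogonal dotProductBilin_nondegenerate F,
    fun M hM y hy x hx => ?_⟩
  have : (Mᵀ *ᵥ x) ⬝ᵥ y = 0 := hy _ (hF _ hM x hx)
  change x ⬝ᵥ (M *ᵥ y) = 0
  rwa [dotProduct_mulVec, ← mulVec_transpose]

end TransposeSpace

/-- The matrices of `V` have a common nonzero vector in their kernels. -/
def HasCommonNullVector {R : Type*} [Semiring R] {n : Type*} [Fintype n]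
    (V : Submodule R (Matrix n n R)) : Prop :=
  ∃ x ≠ 0, ∀ M ∈ V, M *ᵥ x = 0

section ZeroJoin

variable {R : Type*} [CommRing R] {n : ℕ}

/-- The linear map that deletes the first row and the first column of a matrix. -/
@[simps]
def lowerRightBlock : Matrix (Fin (n + 1)) (Fin (n + 1)) R →ₗ[R] Matrix (Fin n) (Fin n) R where
  toFun M := M.submatrix Fin.succ Fin.succ
  map_add' _ _ := rfl
  map_smul' _ _ := rfl

lemma det_sub_one_of_col_zero {M : Matrix (Fin (n + 1)) (Fin (n + 1)) R} (hM : M.col 0 = 0) :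
    (M - 1).det = -(lowerRightBlock M - 1).det := by
  have hcol (i : Fin (n + 1)) : M i 0 = 0 := congrFun hM i
  have hblock : (M - 1).submatrix Fin.succ Fin.succ = lowerRightBlock M - 1 := by
    rw [submatrix_sub, Pi.sub_apply, Pi.sub_apply, submatrix_one _ (Fin.succ_injective n),
      lowerRightBlock_apply]
  simp [det_succ_column_zero, Fin.sum_univ_succ, hcol, hblock]

/-- The space `{0} ∨ U` of the matrices `[[0, r], [0, A]]` with `A ∈ U` and `r` an arbitrary row. -/
def zeroJoin (U : Submodule R (Matrix (Fin n) (Fin n) R)) :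
    Submodule R (Matrix (Fin (n + 1)) (Fin (n + 1)) R) :=
  LinearMap.ker ((mulVecBilin R R).flip (Pi.single 0 1)) ⊓ U.comap lowerRightBlock

lemma mem_zeroJoin {U : Submodule R (Matrix (Fin n) (Fin n) R)}
    {M : Matrix (Fin (n + 1)) (Fin (n + 1)) R} :
    M ∈ zeroJoin U ↔ M.col 0 = 0 ∧ lowerRightBlock M ∈ U := by
  simp [zeroJoin]

/-- A matrix of `{0} ∨ U` as the pair of its top row and its lower right block. -/
def zeroJoinEquiv (U : Submodule R (Matrix (Fin n) (Fin n) R)) :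
    zeroJoin U ≃ₗ[R] (Fin n → R) × U where
  toFun M := (fun j => M.1 0 j.succ, ⟨lowerRightBlock M.1, M.2.2⟩)
  map_add' _ _ := rfl
  map_smul' _ _ := rfl
  invFun p := ⟨of (Fin.cons (Fin.cons 0 p.1) fun i => Fin.cons 0 (p.2.1 i)),
    mem_zeroJoin.2 ⟨by ext i; cases i using Fin.cases <;> rfl, p.2.2⟩⟩
  left_inv := by
    rintro ⟨M, hM⟩
    ext i j
    have hcol := congrFun (mem_zeroJoin.1 hM).1 i
    cases i using Fin.cases <;> cases j using Fin.cases <;> first | rfl | exact hcol.symm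
  right_inv _ := rfl

lemma finrank_zeroJoin {K : Type*} [Field K] (U : Submodule K (Matrix (Fin n) (Fin n) K)) :
    finrank K (zeroJoin U) = n + finrank K U := by
  simp [(zeroJoinEquiv U).finrank_eq]

lemma hasCommonNullVector_zeroJoin [Nontrivial R] (U : Submodule R (Matrix (Fin n) (Fin n) R)) :
    HasCommonNullVector (zeroJoin U) :=
  ⟨Pi.single 0 1, by simp, fun _ hM => hM.1⟩

/-- The block diagonal matrix `1 ⊕ Q`, multiplicatively in `Q`. -/
def oneDirectSum : Matrix (Fin n) (Fin n) R →* Matrix (Fin (n + 1)) (Fin (n + 1)) R where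
  toFun Q := of (Fin.cons (Fin.cons 1 0) fun i => Fin.cons 0 (Q i))
  map_one' := by
    ext i j
    cases i using Fin.cases <;> cases j using Fin.cases <;>
      simp [one_apply, (Fin.succ_ne_zero _).symm]
  map_mul' Q Q' := by
    ext i j
    cases i using Fin.cases <;> cases j using Fin.cases <;> simp [mul_apply, Fin.sum_univ_succ]

lemma lowerRightBlock_conjModuleAut_oneDirectSum (P : GL (Fin n) R)
    (M : Matrix (Fin (n + 1)) (Fin (n + 1)) R) :
    lowerRightBlock (conjModuleAut (Units.map oneDirectSum P) M) =
      conjModuleAut P (lowerRightBlock M) := by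
  rw [conjModuleAut_apply, conjModuleAut_apply, ← map_inv, Units.coe_map, Units.coe_map]
  ext i j
  simp [oneDirectSum, mul_apply, Fin.sum_univ_succ, -coe_units_inv]

lemma oneDirectSum_mulVec_single_zero (Q : Matrix (Fin n) (Fin n) R) :
    oneDirectSum Q *ᵥ Pi.single 0 1 = Pi.single 0 1 := by
  ext i
  cases i using Fin.cases <;> simp [oneDirectSum]

lemma col_zero_conjModuleAut_oneDirectSum (P : GL (Fin n) R)
    {M : Matrix (Fin (n + 1)) (Fin (n + 1)) R} :
    (conjModuleAut (Units.map oneDirectSum P) M).col 0 = 0 ↔ M.col 0 = 0 := by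
  have hP : (Units.map oneDirectSum P).1 *ᵥ Pi.single 0 1 = Pi.single 0 1 :=
    oneDirectSum_mulVec_single_zero P.1
  rw [← mulVec_single_one, ← mulVec_single_one M,
    ← conjModuleAut_mulVec_eq_zero_iff (Units.map oneDirectSum P) M, hP]

end ZeroJoin

section Similarity

variable {n : ℕ} {V W X : Submodule (ZMod 2) (Matrix (Fin n) (Fin n) (ZMod 2))}

lemma matSimilar_iff_exists_map_eq :
    MatSimilar V W ↔ ∃ P, V.map (conjModuleAut P).toLinearMap = W := by
  constructor
  · rintro ⟨_, ⟨P, rfl⟩, hW⟩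
    refine ⟨P, SetLike.coe_injective ?_⟩
    rw [hW, ← coe_units_inv]
    rfl
  · rintro ⟨P, rfl⟩
    refine ⟨P, P.isUnit, ?_⟩
    rw [← coe_units_inv]
    rfl

lemma matSimilar_iff_exists_forall_mem_iff :
    MatSimilar V W ↔ ∃ P, ∀ M, conjModuleAut P M ∈ W ↔ M ∈ V := by
  rw [matSimilar_iff_exists_map_eq]
  refine exists_congr fun P => ?_
  rw [Submodule.map_equiv_eq_comap_symm, SetLike.ext_iff, ← (conjModuleAut P).forall_congr_right]
  simp [iff_comm]

lemma MatSimilar.symm (h : MatSimilar V W) : MatSimilar W V := by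
  obtain ⟨P, hP⟩ := matSimilar_iff_exists_forall_mem_iff.1 h
  refine matSimilar_iff_exists_forall_mem_iff.2 ⟨P⁻¹, fun M => ?_⟩
  rw [← hP, map_inv, ← LinearEquiv.mul_apply, mul_inv_cancel]
  rfl

lemma MatSimilar.trans (hVW : MatSimilar V W) (hWX : MatSimilar W X) : MatSimilar V X := by
  obtain ⟨P, hP⟩ := matSimilar_iff_exists_forall_mem_iff.1 hVW
  obtain ⟨Q, hQ⟩ := matSimilar_iff_exists_forall_mem_iff.1 hWX
  refine matSimilar_iff_exists_forall_mem_iff.2 ⟨Q * P, fun M => ?_⟩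
  rw [map_mul, LinearEquiv.mul_apply, hQ, hP]

lemma MatSimilar.finrank_eq (h : MatSimilar V W) : finrank (ZMod 2) V = finrank (ZMod 2) W := by
  obtain ⟨P, rfl⟩ := matSimilar_iff_exists_map_eq.1 h
  exact ((conjModuleAut P).finrank_map_eq V).symm

lemma matSimilar_of_forall_submatrix_mem_iff (σ : Equiv.Perm (Fin n))
    (hσ : ∀ M, M.submatrix σ σ ∈ W ↔ M ∈ V) : MatSimilar V W := by
  let P : GL (Fin n) (ZMod 2) :=
    ⟨σ.toPEquiv.toMatrix, σ.symm.toPEquiv.toMatrix,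
      by simp [← PEquiv.toMatrix_trans, ← Equiv.toPEquiv_trans],
      by simp [← PEquiv.toMatrix_trans, ← Equiv.toPEquiv_trans]⟩
  refine matSimilar_iff_exists_forall_mem_iff.2 ⟨P, fun M => ?_⟩
  rw [← hσ, conjModuleAut_apply, Units.inv_mk, PEquiv.toMatrix_toPEquiv_mul,
    PEquiv.mul_toMatrix_toPEquiv, submatrix_submatrix]
  rfl

lemma MatSimilar.transposeSpace (h : MatSimilar V W) :
    MatSimilar (transposeSpace V) (transposeSpace W) := by
  obtain ⟨P, hP⟩ := matSimilar_iff_exists_forall_mem_iff.1 h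
  let Q : GL (Fin n) (ZMod 2) :=
    ⟨P⁻¹.1ᵀ, P.1ᵀ, by simp [← transpose_mul], by simp [← transpose_mul]⟩
  refine matSimilar_iff_exists_forall_mem_iff.2 ⟨Q, fun M => ?_⟩
  have hQ : (conjModuleAut Q M)ᵀ = conjModuleAut P Mᵀ := by
    simp [Q, conjModuleAut_apply, mul_assoc, -coe_units_inv]
  change (conjModuleAut Q M)ᵀ ∈ W ↔ Mᵀ ∈ V
  rw [hQ, hP]

lemma MatSimilar.hasCommonNullVector (h : MatSimilar V W) (hV : HasCommonNullVector V) :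
    HasCommonNullVector W := by
  obtain ⟨P, rfl⟩ := matSimilar_iff_exists_map_eq.1 h
  obtain ⟨x, hx, hVx⟩ := hV
  refine ⟨P.1 *ᵥ x, mt (generalLinearGroup_mulVec_eq_zero_iff P).1 hx, ?_⟩
  rintro _ ⟨M, hM, rfl⟩
  exact (conjModuleAut_mulVec_eq_zero_iff P M).2 (hVx M hM)

lemma MatSimilar.zeroJoin (h : MatSimilar V W) : MatSimilar (zeroJoin V) (zeroJoin W) := by
  obtain ⟨P, hP⟩ := matSimilar_iff_exists_forall_mem_iff.1 h
  refine matSimilar_iff_exists_forall_mem_iff.2 ⟨Units.map oneDirectSum P, fun M => ?_⟩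
  rw [mem_zeroJoin, mem_zeroJoin, col_zero_conjModuleAut_oneDirectSum,
    lowerRightBlock_conjModuleAut_oneDirectSum, hP]

end Similarity

section TrivialSpectrum

variable {n : ℕ}

lemma trivialSpectrum_iff_det_sub_one_ne_zero
    {V : Submodule (ZMod 2) (Matrix (Fin n) (Fin n) (ZMod 2))} :
    TrivialSpectrum V ↔ ∀ M ∈ V, (M - 1).det ≠ 0 := by
  refine forall₂_congr fun M _ => ?_
  rw [Ne, ← exists_mulVec_eq_zero_iff]
  push Not
  refine ⟨fun h x hx => ?_, fun h c x hc hx => ?_⟩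
  · simpa [sub_mulVec, sub_eq_zero] using h 1 x one_ne_zero hx
  · obtain rfl : c = (1 : ZMod 2) := Fin.eq_one_of_ne_zero c hc
    simpa [sub_mulVec, sub_eq_zero] using h x hx

lemma TrivialSpectrum.of_matSimilar {V W : Submodule (ZMod 2) (Matrix (Fin n) (Fin n) (ZMod 2))}
    (hV : TrivialSpectrum V) (h : MatSimilar V W) : TrivialSpectrum W := by
  obtain ⟨P, rfl⟩ := matSimilar_iff_exists_map_eq.1 h
  rw [trivialSpectrum_iff_det_sub_one_ne_zero] at hV ⊢
  rintro _ ⟨M, hM, rfl⟩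
  have hP : conjModuleAut P M - 1 = P.1 * (M - 1) * P⁻¹.1 := by
    rw [conjModuleAut_apply, mul_sub, sub_mul, mul_one, Units.mul_inv]
  rw [LinearEquiv.coe_coe, hP, coe_units_inv, det_conj P.isUnit]
  exact hV M hM

lemma trivialSpectrum_transposeSpace
    {V : Submodule (ZMod 2) (Matrix (Fin n) (Fin n) (ZMod 2))} (hV : TrivialSpectrum V) :
    TrivialSpectrum (transposeSpace V) := by
  rw [trivialSpectrum_iff_det_sub_one_ne_zero] at hV ⊢
  intro M hM
  rw [← det_transpose, transpose_sub, transpose_one]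
  exact hV Mᵀ hM

lemma trivialSpectrum_zeroJoin {U : Submodule (ZMod 2) (Matrix (Fin n) (Fin n) (ZMod 2))}
    (hU : TrivialSpectrum U) : TrivialSpectrum (zeroJoin U) := by
  rw [trivialSpectrum_iff_det_sub_one_ne_zero] at hU ⊢
  intro M hM
  rw [mem_zeroJoin] at hM
  rw [det_sub_one_of_col_zero hM.1, neg_ne_zero]
  exact hU _ hM.2

lemma TrivialSpectrum.map_lowerRightBlock
    {V : Submodule (ZMod 2) (Matrix (Fin (n + 1)) (Fin (n + 1)) (ZMod 2))}
    (hV : TrivialSpectrum V) (hcol : ∀ M ∈ V, M.col 0 = 0) :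
    TrivialSpectrum (V.map lowerRightBlock) := by
  rw [trivialSpectrum_iff_det_sub_one_ne_zero] at hV ⊢
  rintro _ ⟨M, hM, rfl⟩
  rw [← neg_ne_zero, ← det_sub_one_of_col_zero (hcol M hM)]
  exact hV M hM

lemma TrivialSpectrum.exists_mem_mulVec_eq_zero
    {V : Submodule (ZMod 2) (Matrix (Fin n) (Fin n) (ZMod 2))} (hV : TrivialSpectrum V)
    (hn : n ≤ finrank (ZMod 2) V) {x : Fin n → ZMod 2} (hx : x ≠ 0) :
    ∃ M ∈ V, M ≠ 0 ∧ M *ᵥ x = 0 := by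
  by_contra! hinj
  let f : V →ₗ[ZMod 2] Fin n → ZMod 2 :=
    (mulVecBilin (ZMod 2) (ZMod 2)).flip x ∘ₗ V.subtype
  have hf : Function.Injective f :=
    (injective_iff_map_eq_zero f).2 fun M hM => by
      by_contra hne
      exact hinj M M.2 (by simpa using hne) hM
  have hrange : LinearMap.range f = ⊤ := by
    refine Submodule.eq_top_of_finrank_eq (le_antisymm (Submodule.finrank_le _) ?_)
    rwa [LinearMap.finrank_range_of_inj hf, finrank_fin_fun]
  obtain ⟨M, hM⟩ := LinearMap.range_eq_top.1 hrange x
  exact hV M M.2 1 x one_ne_zero hx (hM.trans (one_smul _ x).symm)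

lemma eq_single_of_col_eq_zero_of_det_sub_one_ne_zero {i j : Fin 2} (hij : i ≠ j)
    {M : Matrix (Fin 2) (Fin 2) (ZMod 2)} (hM : M ≠ 0) (hcol : M.col i = 0)
    (hdet : (M - 1).det ≠ 0) : M = single i j 1 := by
  decide +revert

lemma TrivialSpectrum.single_mem {U : Submodule (ZMod 2) (Matrix (Fin 2) (Fin 2) (ZMod 2))}
    (hU : TrivialSpectrum U) (h2 : 2 ≤ finrank (ZMod 2) U) {i j : Fin 2} (hij : i ≠ j) :
    single i j 1 ∈ U := by
  obtain ⟨M, hMU, hM, hMi⟩ := hU.exists_mem_mulVec_eq_zero h2 (x := Pi.single i 1) (by simp)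
  rw [mulVec_single_one] at hMi
  have hdet := trivialSpectrum_iff_det_sub_one_ne_zero.1 hU M hMU
  rwa [← eq_single_of_col_eq_zero_of_det_sub_one_ne_zero hij hM hMi hdet]

lemma TrivialSpectrum.finrank_le_one {U : Submodule (ZMod 2) (Matrix (Fin 2) (Fin 2) (ZMod 2))}
    (hU : TrivialSpectrum U) : finrank (ZMod 2) U ≤ 1 := by
  by_contra! h2
  have hswap := U.add_mem (hU.single_mem h2 (i := 0) (j := 1) (by simp))
    (hU.single_mem h2 (i := 1) (j := 0) (by simp))
  exact trivialSpectrum_iff_det_sub_one_ne_zero.1 hU _ hswap (by decide)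

end TrivialSpectrum

section Reducible

variable {n : ℕ} {V : Submodule (ZMod 2) (Matrix (Fin n) (Fin n) (ZMod 2))}

lemma HasCommonNullVector.not_irredMatSpace (hn : 2 ≤ n) (hV : HasCommonNullVector V) :
    ¬ IrredMatSpace V := by
  obtain ⟨x, hx, hVx⟩ := hV
  refine not_not.2 ⟨Submodule.span (ZMod 2) {x}, by simpa, fun htop => ?_, fun M hM y hy => ?_⟩
  · have := finrank_span_singleton (K := ZMod 2) hx
    rw [htop, finrank_top, finrank_fin_fun] at this
    omega
  · obtain ⟨c, rfl⟩ := Submodule.mem_span_singleton.1 hy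
    simp [mulVec_smul, hVx M hM]

lemma not_irredMatSpace_iff_exists_finrank :
    ¬ IrredMatSpace V ↔ ∃ F : Submodule (ZMod 2) (Fin n → ZMod 2),
      0 < finrank (ZMod 2) F ∧ finrank (ZMod 2) F < n ∧ ∀ M ∈ V, ∀ x ∈ F, M *ᵥ x ∈ F := by
  rw [IrredMatSpace, not_not]
  refine exists_congr fun F => ?_
  have hbot : F ≠ ⊥ ↔ 0 < finrank (ZMod 2) F := by
    rw [pos_iff_ne_zero, Ne, Ne, Submodule.finrank_eq_zero]
  have htop : F ≠ ⊤ ↔ finrank (ZMod 2) F < n := by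
    refine ⟨fun h => (Submodule.finrank_lt h).trans_eq (finrank_fin_fun _), ?_⟩
    rintro hlt rfl
    rw [finrank_top, finrank_fin_fun] at hlt
    exact hlt.false
  rw [hbot, htop]

lemma not_irredMatSpace_transposeSpace (hV : ¬ IrredMatSpace V) :
    ¬ IrredMatSpace (transposeSpace V) := by
  rw [not_irredMatSpace_iff_exists_finrank] at hV ⊢
  obtain ⟨F, hpos, hlt, hF⟩ := hV
  obtain ⟨F', hF', hinv⟩ := exists_invariant_transposeSpace hF
  rw [Fintype.card_fin] at hF'
  exact ⟨F', by omega, by omega, hinv⟩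

lemma TrivialSpectrum.hasCommonNullVector_of_finrank_eq_one (hV : TrivialSpectrum V)
    {F : Submodule (ZMod 2) (Fin n → ZMod 2)} (hF : finrank (ZMod 2) F = 1)
    (hinv : ∀ M ∈ V, ∀ x ∈ F, M *ᵥ x ∈ F) : HasCommonNullVector V := by
  obtain ⟨⟨x, hxF⟩, hx, hspan⟩ := finrank_eq_one_iff'.1 hF
  have hx0 : x ≠ 0 := by simpa using hx
  refine ⟨x, hx0, fun M hM => ?_⟩
  obtain ⟨c, hc⟩ := hspan ⟨M *ᵥ x, hinv M hM x hxF⟩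
  have hMx : c • x = M *ᵥ x := congrArg Subtype.val hc
  rcases eq_or_ne c 0 with rfl | hc0
  · rw [← hMx, zero_smul]
  · exact absurd hMx.symm (hV M hM c x hc0 hx0)

lemma TrivialSpectrum.hasCommonNullVector_or_transposeSpace
    {V : Submodule (ZMod 2) (Matrix (Fin 3) (Fin 3) (ZMod 2))} (hV : TrivialSpectrum V)
    (hred : ¬ IrredMatSpace V) :
    HasCommonNullVector V ∨ HasCommonNullVector (transposeSpace V) := by
  obtain ⟨F, hpos, hlt, hF⟩ := not_irredMatSpace_iff_exists_finrank.1 hred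
  obtain h1 | h2 : finrank (ZMod 2) F = 1 ∨ finrank (ZMod 2) F = 2 := by omega
  · exact .inl (hV.hasCommonNullVector_of_finrank_eq_one h1 hF)
  · obtain ⟨F', hF', hinv⟩ := exists_invariant_transposeSpace hF
    rw [h2, Fintype.card_fin] at hF'
    exact .inr ((trivialSpectrum_transposeSpace hV).hasCommonNullVector_of_finrank_eq_one hF' hinv)

lemma HasCommonNullVector.exists_matSimilar_forall_col_zero
    {V : Submodule (ZMod 2) (Matrix (Fin (n + 1)) (Fin (n + 1)) (ZMod 2))}
    (hV : HasCommonNullVector V) : ∃ W, MatSimilar V W ∧ ∀ M ∈ W, M.col 0 = 0 := by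
  obtain ⟨x, hx, hVx⟩ := hV
  obtain ⟨P, hP⟩ := exists_generalLinearGroup_mulVec_eq hx (y := Pi.single 0 1) (by simp)
  refine ⟨V.map (conjModuleAut P).toLinearMap, matSimilar_iff_exists_map_eq.2 ⟨P, rfl⟩, ?_⟩
  rintro _ ⟨M, hM, rfl⟩
  rw [← mulVec_single_one, ← hP]
  exact (conjModuleAut_mulVec_eq_zero_iff P M).2 (hVx M hM)

end Reducible

section Classification

/-- The block `!![0, 1; t, t]` of the model spaces: a nilpotent Jordan block for `t = 0`, and the
matrix `C`, whose characteristic polynomial `X ^ 2 + X + 1` is irreducible, for `t = 1`. -/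
def modelBlock (t : ZMod 2) : Matrix (Fin 2) (Fin 2) (ZMod 2) :=
  !![0, 1; t, t]

lemma mem_span_modelBlock {t : ZMod 2} {A : Matrix (Fin 2) (Fin 2) (ZMod 2)} :
    A ∈ Submodule.span (ZMod 2) {modelBlock t} ↔
      A 0 0 = 0 ∧ A 1 0 = t * A 0 1 ∧ A 1 1 = t * A 0 1 := by
  rw [Submodule.mem_span_singleton]
  constructor
  · rintro ⟨c, rfl⟩
    simp [modelBlock, mul_comm]
  · rintro ⟨h00, h10, h11⟩
    refine ⟨A 0 1, ?_⟩
    rw [A.eta_fin_two]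
    simp [modelBlock, h00, h10, h11, mul_comm]

lemma finrank_span_modelBlock (t : ZMod 2) :
    finrank (ZMod 2) (Submodule.span (ZMod 2) {modelBlock t}) = 1 :=
  finrank_span_singleton fun h => one_ne_zero (congrFun₂ h 0 1)

lemma trivialSpectrum_span_modelBlock (t : ZMod 2) :
    TrivialSpectrum (Submodule.span (ZMod 2) {modelBlock t}) := by
  rw [trivialSpectrum_iff_det_sub_one_ne_zero]
  intro M hM
  obtain ⟨c, rfl⟩ := Submodule.mem_span_singleton.1 hM
  clear hM
  decide +revert

lemma neg_det_eq_trace_of_det_sub_one_ne_zero {A : Matrix (Fin 2) (Fin 2) (ZMod 2)}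
    (hA : (A - 1).det ≠ 0) : -A.det = A.trace := by
  have hdet : (A - 1).det = A.det - A.trace + 1 := by
    simp only [det_fin_two, trace_fin_two, Matrix.sub_apply, one_apply_eq, one_apply_ne, ne_eq,
      zero_ne_one, one_ne_zero, not_false_eq_true, sub_zero]
    ring
  rw [hdet] at hA
  generalize A.det = d, A.trace = t at hA
  decide +revert

lemma exists_conjModuleAut_eq_modelBlock {A : Matrix (Fin 2) (Fin 2) (ZMod 2)} (hA0 : A ≠ 0)
    (hA : (A - 1).det ≠ 0) : ∃ t P, conjModuleAut P A = modelBlock t := by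
  have hscalar (c : ZMod 2) : A ≠ c • 1 := by
    rintro rfl
    revert c
    decide
  obtain ⟨P, hP⟩ := exists_conj_eq_companion hscalar
  exact ⟨A.trace, P, by rw [hP, neg_det_eq_trace_of_det_sub_one_ne_zero hA, modelBlock]⟩

lemma TrivialSpectrum.exists_matSimilar_span_modelBlock
    {U : Submodule (ZMod 2) (Matrix (Fin 2) (Fin 2) (ZMod 2))} (hU : TrivialSpectrum U)
    (h1 : finrank (ZMod 2) U = 1) :
    ∃ t, MatSimilar U (Submodule.span (ZMod 2) {modelBlock t}) := by
  obtain ⟨A, hAU, hA0⟩ := U.exists_mem_ne_zero_of_ne_bot (by rintro rfl; simp at h1)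
  obtain ⟨t, P, hP⟩ :=
    exists_conjModuleAut_eq_modelBlock hA0 (trivialSpectrum_iff_det_sub_one_ne_zero.1 hU A hAU)
  refine ⟨t, matSimilar_iff_exists_map_eq.2 ⟨P, ?_⟩⟩
  rw [eq_span_singleton_of_mem_of_finrank_eq_one h1 hAU hA0, LinearMap.map_span,
    Set.image_singleton, LinearEquiv.coe_coe, hP]

/-- The space `{0} ∨ F2·modelBlock t`. -/
def modelSpace (t : ZMod 2) : Submodule (ZMod 2) (Matrix (Fin 3) (Fin 3) (ZMod 2)) :=
  zeroJoin (Submodule.span (ZMod 2) {modelBlock t})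

lemma trivialSpectrum_modelSpace (t : ZMod 2) : TrivialSpectrum (modelSpace t) :=
  trivialSpectrum_zeroJoin (trivialSpectrum_span_modelBlock t)

lemma hasCommonNullVector_modelSpace (t : ZMod 2) : HasCommonNullVector (modelSpace t) :=
  hasCommonNullVector_zeroJoin _

lemma finrank_modelSpace (t : ZMod 2) : finrank (ZMod 2) (modelSpace t) = 3 := by
  rw [modelSpace, finrank_zeroJoin, finrank_span_modelBlock]

lemma modelSpace_zero : modelSpace 0 = NT3 := by
  ext M
  rw [modelSpace, mem_zeroJoin, mem_span_modelBlock]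
  constructor
  · rintro ⟨hcol, h11, h21, h22⟩ i j hij
    have hM0 (k : Fin 3) : M k 0 = 0 := congrFun hcol k
    fin_cases i <;> fin_cases j <;> simp_all
  · intro h
    have h0 (i j : Fin 3) (hij : j ≤ i) : M i j = 0 := h i j hij
    exact ⟨funext fun i => h0 i 0 (Fin.zero_le i), by simp [h0]⟩

lemma modelSpace_one : modelSpace 1 = SpaceW3 := by
  ext M
  rw [modelSpace, mem_zeroJoin, mem_span_modelBlock]
  constructor
  · rintro ⟨hcol, h11, h21, h22⟩
    refine ⟨M 1 2, M 0 1, M 0 2, ?_⟩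
    rw [M.eta_fin_three]
    simp_all [funext_iff, Fin.forall_fin_succ]
  · rintro ⟨a, x, y, rfl⟩
    simp [funext_iff, Fin.forall_fin_succ]

lemma TrivialSpectrum.exists_matSimilar_modelSpace
    {V : Submodule (ZMod 2) (Matrix (Fin 3) (Fin 3) (ZMod 2))} (hV : TrivialSpectrum V)
    (hnull : HasCommonNullVector V) (h3 : finrank (ZMod 2) V = 3) :
    ∃ t, MatSimilar V (modelSpace t) := by
  obtain ⟨W, hVW, hcol⟩ := hnull.exists_matSimilar_forall_col_zero
  have hU := (hV.of_matSimilar hVW).map_lowerRightBlock hcol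
  set U := W.map lowerRightBlock
  have hWU : W ≤ zeroJoin U := fun M hM =>
    mem_zeroJoin.2 ⟨hcol M hM, Submodule.mem_map_of_mem hM⟩
  have hW3 : finrank (ZMod 2) W = 3 := hVW.finrank_eq ▸ h3
  have hU1 : finrank (ZMod 2) U = 1 := by
    have hle := Submodule.finrank_mono hWU
    rw [finrank_zeroJoin] at hle
    have := hU.finrank_le_one
    omega
  have hW : W = zeroJoin U :=
    Submodule.eq_of_le_of_finrank_eq hWU (by rw [finrank_zeroJoin, hU1, hW3])
  obtain ⟨t, ht⟩ := hU.exists_matSimilar_span_modelBlock hU1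
  exact ⟨t, hVW.trans (hW ▸ ht.zeroJoin)⟩

lemma TrivialSpectrum.matSimilar_NT3_or_SpaceW3
    {V : Submodule (ZMod 2) (Matrix (Fin 3) (Fin 3) (ZMod 2))} (hV : TrivialSpectrum V)
    (hnull : HasCommonNullVector V) (h3 : finrank (ZMod 2) V = 3) :
    MatSimilar V NT3 ∨ MatSimilar V SpaceW3 := by
  obtain ⟨t, ht⟩ := hV.exists_matSimilar_modelSpace hnull h3
  obtain rfl | rfl : t = 0 ∨ t = 1 := (by decide : ∀ t : ZMod 2, t = 0 ∨ t = 1) t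
  · exact .inl (modelSpace_zero ▸ ht)
  · exact .inr (modelSpace_one ▸ ht)

lemma matSimilar_transposeSpace_NT3 : MatSimilar (transposeSpace NT3) NT3 :=
  matSimilar_of_forall_submatrix_mem_iff Fin.revPerm fun M =>
    ⟨fun h i j hji => by simpa using h j.rev i.rev (Fin.rev_le_rev.2 hji),
      fun h i j hji => h j.rev i.rev (Fin.rev_le_rev.2 hji)⟩

lemma matSimilar_transposeSpace_SpaceW3 : MatSimilar (transposeSpace SpaceW3) SpaceW2 :=
  matSimilar_of_forall_submatrix_mem_iff (finRotate 3) fun M => by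
    refine exists_congr fun a => exists_congr fun x => exists_congr fun y => ?_
    have hrotate : !![0, a, x; a, a, y; 0, 0, 0] =
        (!![0, x, y; 0, 0, a; 0, a, a]ᵀ).submatrix (finRotate 3) (finRotate 3) := by
      decide +revert
    change M.submatrix (finRotate 3) (finRotate 3) = _ ↔ Mᵀ = _
    rw [hrotate, ← transpose_inj (A := Mᵀ), transpose_transpose]
    refine ⟨fun h => ?_, fun h => h ▸ rfl⟩
    simpa using congrArg (reindex (finRotate 3) (finRotate 3)) h

lemma not_hasCommonNullVector_SpaceW2 : ¬ HasCommonNullVector SpaceW2 := by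
  rintro ⟨v, hv, hW2⟩
  obtain ⟨h1, h01⟩ : v 1 = 0 ∧ v 0 + v 1 = 0 := by
    simpa [funext_iff, Fin.forall_fin_succ, mulVec, dotProduct, Fin.sum_univ_succ] using
      hW2 _ ⟨1, 0, 0, rfl⟩
  have h2 : v 2 = 0 := by
    simpa [funext_iff, Fin.forall_fin_succ, mulVec, dotProduct, Fin.sum_univ_succ] using
      hW2 _ ⟨0, 1, 0, rfl⟩
  have h0 : v 0 = 0 := by simpa [h1] using h01
  exact hv (funext (by simp [Fin.forall_fin_succ, h0, h1, h2]))

lemma not_matSimilar_NT3_SpaceW3 : ¬ MatSimilar NT3 SpaceW3 := fun h =>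
  have hNT3 : HasCommonNullVector NT3 := modelSpace_zero ▸ hasCommonNullVector_modelSpace 0
  have hNT3_SpaceW2 : MatSimilar NT3 SpaceW2 :=
    (matSimilar_transposeSpace_NT3.symm.trans h.transposeSpace).trans
      matSimilar_transposeSpace_SpaceW3
  not_hasCommonNullVector_SpaceW2 (hNT3_SpaceW2.hasCommonNullVector hNT3)

lemma TrivialSpectrum.matSimilar_NT3_or_SpaceW2
    {V : Submodule (ZMod 2) (Matrix (Fin 3) (Fin 3) (ZMod 2))} (hV : TrivialSpectrum V)
    (hnull : HasCommonNullVector (transposeSpace V)) (h3 : finrank (ZMod 2) V = 3) :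
    MatSimilar V NT3 ∨ MatSimilar V SpaceW2 :=
  ((trivialSpectrum_transposeSpace hV).matSimilar_NT3_or_SpaceW3 hnull
    ((finrank_transposeSpace V).trans h3)).imp
      (fun h => h.transposeSpace.trans matSimilar_transposeSpace_NT3)
      fun h => h.transposeSpace.trans matSimilar_transposeSpace_SpaceW3

end Classification

theorem classification_of_reducible_trivial_spectrum_spaces :
    (TrivialSpectrum NT3 ∧ ¬ IrredMatSpace NT3 ∧
      Module.finrank (ZMod 2) NT3 = 3) ∧
    (TrivialSpectrum SpaceW2 ∧ ¬ IrredMatSpace SpaceW2 ∧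
      Module.finrank (ZMod 2) SpaceW2 = 3) ∧
    (TrivialSpectrum SpaceW3 ∧ ¬ IrredMatSpace SpaceW3 ∧
      Module.finrank (ZMod 2) SpaceW3 = 3) ∧
    (¬ MatSimilar NT3 SpaceW2 ∧ ¬ MatSimilar NT3 SpaceW3 ∧
      ¬ MatSimilar SpaceW2 SpaceW3) ∧
    ∀ V : Submodule (ZMod 2) (Matrix (Fin 3) (Fin 3) (ZMod 2)),
      TrivialSpectrum V → ¬ IrredMatSpace V → Module.finrank (ZMod 2) V = 3 →
      MatSimilar V NT3 ∨ MatSimilar V SpaceW2 ∨ MatSimilar V SpaceW3 := by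
  have hNT3 : HasCommonNullVector NT3 := modelSpace_zero ▸ hasCommonNullVector_modelSpace 0
  have hW3 : HasCommonNullVector SpaceW3 := modelSpace_one ▸ hasCommonNullVector_modelSpace 1
  have hW3_trivial : TrivialSpectrum SpaceW3 := modelSpace_one ▸ trivialSpectrum_modelSpace 1
  have hW3_finrank : finrank (ZMod 2) SpaceW3 = 3 := modelSpace_one ▸ finrank_modelSpace 1
  have hW3_W2 : MatSimilar (transposeSpace SpaceW3) SpaceW2 := matSimilar_transposeSpace_SpaceW3
  have hW2 : HasCommonNullVector (transposeSpace SpaceW2) :=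
    hW3_W2.transposeSpace.hasCommonNullVector hW3
  refine ⟨⟨modelSpace_zero ▸ trivialSpectrum_modelSpace 0, hNT3.not_irredMatSpace (by decide),
      modelSpace_zero ▸ finrank_modelSpace 0⟩,
    ⟨(trivialSpectrum_transposeSpace hW3_trivial).of_matSimilar hW3_W2,
      not_irredMatSpace_transposeSpace (hW2.not_irredMatSpace (by decide)),
      hW3_W2.finrank_eq ▸ finrank_transposeSpace SpaceW3 ▸ hW3_finrank⟩,
    ⟨hW3_trivial, hW3.not_irredMatSpace (by decide), hW3_finrank⟩,
    ⟨fun h => not_hasCommonNullVector_SpaceW2 (h.hasCommonNullVector hNT3),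
      not_matSimilar_NT3_SpaceW3,
      fun h => not_hasCommonNullVector_SpaceW2 (h.symm.hasCommonNullVector hW3)⟩,
    fun V hV hred h3 => ?_⟩
  obtain hnull | hnull := hV.hasCommonNullVector_or_transposeSpace hred
  · exact (hV.matSimilar_NT3_or_SpaceW3 hnull h3).imp_right .inr
  · exact (hV.matSimilar_NT3_or_SpaceW2 hnull h3).imp_right .inl
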